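/- Purity of normal forms: call a term pure if it contains no subterm of the shape s∘N. If Γ ⊢ M is derivable and the judgement Γ ⊢ M is a normal form with respect to the one-step σπα-reduction ⇝ on judgements (which includes the rule α₂ renaming a context variable), then M is pure. -/

import Mathlib

/- Named terms and substitutions of the λπ-calculus. Variables are natural numbers. -/
mutual
inductive Tm : Type
  | var : ℕ → Tm
  | app : Tm → Tm → Tm
  | lam : ℕ → Tm → Tm
  | clos : Subst → Tm → Tm
inductive Subst : Type
  | id : Subst
  | pi : ℕ → Subst
  | cons : Subst → Tm → ℕ → Subst
  | comp : Subst → Subst → Subst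
end

/- Contexts are lists of variables; the head of the list is the *rightmost* variable,
so the context `Γ, a` of the paper is `a :: Γ`. -/
mutual
/-- `WfTm Γ M` is the judgement `Γ ⊢ M`. -/
inductive WfTm : List ℕ → Tm → Prop
  | var (Γ : List ℕ) (a : ℕ) : WfTm (a :: Γ) (.var a)
  | weak {Γ : List ℕ} {a : ℕ} (b : ℕ) : a ≠ b → WfTm Γ (.var a) → WfTm (b :: Γ) (.var a)
  | app {Γ M N} : WfTm Γ M → WfTm Γ N → WfTm Γ (.app M N)
  | lam {Γ a M} : WfTm (a :: Γ) M → WfTm Γ (.lam a M)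
  | clos {Γ s Δ M} : WfSub Γ s Δ → WfTm Δ M → WfTm Γ (.clos s M)
/-- `WfSub Γ s Δ` is the judgement `Γ ⊢ s ▷ Δ`. -/
inductive WfSub : List ℕ → Subst → List ℕ → Prop
  | id (Γ) : WfSub Γ .id Γ
  | pi (Γ a) : WfSub (a :: Γ) (.pi a) Γ
  | cons {Γ s Δ N} (a) : WfSub Γ s Δ → WfTm Γ N → WfSub Γ (.cons s N a) (a :: Δ)
  | comp {Γ s Δ q Θ} : WfSub Γ s Δ → WfSub Δ q Θ → WfSub Γ (.comp s q) Θ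
end

/-- The operator `O_{λa}` on sequences of finite sets (sequences are 0-indexed:
index `n` corresponds to the paper's index `n+1`). -/
def Olam (a : ℕ) (A : ℕ → Finset ℕ) : ℕ → Finset ℕ
  | 0 => (A 0).erase a ∪ A 1
  | n + 1 => A (n + 2)

/-- The operator `O_π`. -/
def Opi (A : ℕ → Finset ℕ) : ℕ → Finset ℕ
  | 0 => ∅
  | n + 1 => A n

mutual
/-- The free-variable sequence of a term: `FV M n` is the paper's `FV_{n+1}(M)`. -/
def FV : Tm → ℕ → Finset ℕ
  | .var a => fun n => if n = 0 then {a} else ∅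
  | .app M N => fun n => FV M n ∪ FV N n
  | .lam a M => Olam a (FV M)
  | .clos s M => Osub s (FV M)
/-- The operator `O_s` associated with a substitution `s`. -/
def Osub : Subst → (ℕ → Finset ℕ) → (ℕ → Finset ℕ)
  | .id => fun A => A
  | .pi _ => fun A => Opi A
  | .cons s N a => fun A n => Osub s (Olam a A) n ∪ FV N n
  | .comp s q => fun A => Osub s (Osub q A)
end

/-- Iterated abstraction `λΓ.M` (recall the head of the list is the rightmost variable). -/
def lamCtx : List ℕ → Tm → Tm
  | [], M => M
  | a :: Γ, M => lamCtx Γ (.lam a M)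

/-- Free variables of a judgement: `FV(Γ ⊢ M) = FV(λΓ.M)`. -/
def FVJ (Γ : List ℕ) (M : Tm) : ℕ → Finset ℕ := FV (lamCtx Γ M)

/-- Iterated lifting `⇑_Δ(s)`. -/
def Uparrow : List ℕ → Subst → Subst
  | [], s => s
  | a :: Δ, s => .cons (.comp (.pi a) (Uparrow Δ s)) (.var a) a

/- One-step reduction of the λπ-calculus (compatible closure).  The Boolean
parameter tells whether the rule `Beta` is allowed: `StepTm true` is λπ-reduction,
`StepTm false` is σπα-reduction. -/
mutual
inductive StepTm : Bool → Tm → Tm → Prop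
  | beta {a : ℕ} {M N : Tm} :
      StepTm true (.app (.lam a M) N) (.clos (.cons .id N a) M)
  | abs {β : Bool} {s : Subst} {a : ℕ} {M : Tm} :
      StepTm β (.clos s (.lam a M))
        (.lam a (.clos (.cons (.comp (.pi a) s) (.var a) a) M))
  | app {β : Bool} {s : Subst} {M N : Tm} :
      StepTm β (.clos s (.app M N)) (.app (.clos s M) (.clos s N))
  | consVar {β : Bool} {s : Subst} {N : Tm} {a : ℕ} :
      StepTm β (.clos (.cons s N a) (.var a)) N
  | new {β : Bool} {s : Subst} {N : Tm} {a b : ℕ} : a ≠ b →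
      StepTm β (.clos (.cons s N a) (.var b)) (.clos s (.var b))
  | idVar {β : Bool} {a : ℕ} : StepTm β (.clos .id (.var a)) (.var a)
  | clos {β : Bool} {s q : Subst} {M : Tm} :
      StepTm β (.clos s (.clos q M)) (.clos (.comp s q) M)
  | pi1 {β : Bool} {a b : ℕ} : a ≠ b → StepTm β (.clos (.pi a) (.var b)) (.var b)
  | pi2 {β : Bool} {s : Subst} {a b : ℕ} : a ≠ b →
      StepTm β (.clos (.comp s (.pi a)) (.var b)) (.clos s (.var b))
  | alpha1 {β : Bool} {a b : ℕ} {M : Tm} :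
      (∃ i, a ∈ FV (.lam a M) i) → (∀ i, b ∉ FV (.lam a M) i) →
      StepTm β (.lam a M) (.lam b (.clos (.cons (.pi b) (.var b) a) M))
  | lamCong {β : Bool} {a : ℕ} {M₁ M₂ : Tm} :
      StepTm β M₁ M₂ → StepTm β (.lam a M₁) (.lam a M₂)
  | appL {β : Bool} {M₁ M₂ N : Tm} : StepTm β M₁ M₂ → StepTm β (.app M₁ N) (.app M₂ N)
  | appR {β : Bool} {M N₁ N₂ : Tm} : StepTm β N₁ N₂ → StepTm β (.app M N₁) (.app M N₂)
  | closL {β : Bool} {s₁ s₂ : Subst} {M : Tm} :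
      StepSub β s₁ s₂ → StepTm β (.clos s₁ M) (.clos s₂ M)
  | closR {β : Bool} {s : Subst} {M₁ M₂ : Tm} :
      StepTm β M₁ M₂ → StepTm β (.clos s M₁) (.clos s M₂)
inductive StepSub : Bool → Subst → Subst → Prop
  | ass {β : Bool} {s q r : Subst} :
      StepSub β (.comp s (.comp q r)) (.comp (.comp s q) r)
  | idR {β : Bool} {s : Subst} : StepSub β (.comp s .id) s
  | idShift {β : Bool} {a : ℕ} : StepSub β (.comp .id (.pi a)) (.pi a)
  | consShift {β : Bool} {s : Subst} {N : Tm} {a : ℕ} :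
      StepSub β (.comp (.cons s N a) (.pi a)) s
  | map {β : Bool} {s q : Subst} {N : Tm} {a : ℕ} :
      StepSub β (.comp s (.cons q N a)) (.cons (.comp s q) (.clos s N) a)
  | consL {β : Bool} {s₁ s₂ : Subst} {N : Tm} {a : ℕ} :
      StepSub β s₁ s₂ → StepSub β (.cons s₁ N a) (.cons s₂ N a)
  | consR {β : Bool} {s : Subst} {N₁ N₂ : Tm} {a : ℕ} :
      StepTm β N₁ N₂ → StepSub β (.cons s N₁ a) (.cons s N₂ a)
  | compL {β : Bool} {s₁ s₂ q : Subst} :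
      StepSub β s₁ s₂ → StepSub β (.comp s₁ q) (.comp s₂ q)
  | compR {β : Bool} {s q₁ q₂ : Subst} :
      StepSub β q₁ q₂ → StepSub β (.comp s q₁) (.comp s q₂)
end

/-- One-step reduction `⇝` on judgements `Γ ⊢ M`, including the rule `α₂`.
`StepJ true` is λπ, `StepJ false` is σπα. -/
inductive StepJ (β : Bool) : List ℕ × Tm → List ℕ × Tm → Prop
  | step {Γ : List ℕ} {M₁ M₂ : Tm} : StepTm β M₁ M₂ → StepJ β (Γ, M₁) (Γ, M₂)
  | alpha2 {Γ Δ : List ℕ} {a b : ℕ} {M : Tm} :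
      (∃ i, a ∈ FVJ (Δ ++ [a]) M i) → (∀ i, b ∉ FVJ (Δ ++ [a]) M i) →
      StepJ β (Δ ++ a :: Γ, M)
        (Δ ++ b :: Γ, .clos (Uparrow Δ (.cons (.pi b) (.var b) a)) M)

/- Name-free (de Bruijn) terms and substitutions. -/
mutual
inductive NTm : Type
  | one : NTm
  | app : NTm → NTm → NTm
  | lam : NTm → NTm
  | clos : NSub → NTm → NTm
inductive NSub : Type
  | id : NSub
  | pi : NSub
  | cons : NSub → NTm → NSub
  | comp : NSub → NSub → NSub
end

/-- `piIter n` is the left-nested composition of `n+1` copies of `π`. -/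
def piIter : ℕ → NSub
  | 0 => .pi
  | k + 1 => .comp (piIter k) .pi

/-- `dbr n` is the de Bruijn index `n+1̲`: `dbr 0 = 1` and
`dbr (n+1) = ((…(π∘π)∘…)∘π)∘1` with `n+1` occurrences of `π`. -/
def dbr : ℕ → NTm
  | 0 => .one
  | n + 1 => .clos (piIter n) .one

/- One-step reduction of λσ (`NStepTm true`) resp. σ (`NStepTm false`)
on name-free terms/substitutions. -/
mutual
inductive NStepTm : Bool → NTm → NTm → Prop
  | beta {U V : NTm} : NStepTm true (.app (.lam U) V) (.clos (.cons .id V) U)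
  | abs {β : Bool} {u : NSub} {U : NTm} :
      NStepTm β (.clos u (.lam U)) (.lam (.clos (.cons (.comp .pi u) .one) U))
  | app {β : Bool} {u : NSub} {U V : NTm} :
      NStepTm β (.clos u (.app U V)) (.app (.clos u U) (.clos u V))
  | consVar {β : Bool} {u : NSub} {V : NTm} : NStepTm β (.clos (.cons u V) .one) V
  | idVar {β : Bool} : NStepTm β (.clos .id .one) .one
  | clos {β : Bool} {u v : NSub} {U : NTm} :
      NStepTm β (.clos u (.clos v U)) (.clos (.comp u v) U)
  | lamCong {β : Bool} {U₁ U₂ : NTm} : NStepTm β U₁ U₂ → NStepTm β (.lam U₁) (.lam U₂)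
  | appL {β : Bool} {U₁ U₂ V : NTm} : NStepTm β U₁ U₂ → NStepTm β (.app U₁ V) (.app U₂ V)
  | appR {β : Bool} {U V₁ V₂ : NTm} : NStepTm β V₁ V₂ → NStepTm β (.app U V₁) (.app U V₂)
  | closL {β : Bool} {u₁ u₂ : NSub} {U : NTm} :
      NStepSub β u₁ u₂ → NStepTm β (.clos u₁ U) (.clos u₂ U)
  | closR {β : Bool} {u : NSub} {U₁ U₂ : NTm} :
      NStepTm β U₁ U₂ → NStepTm β (.clos u U₁) (.clos u U₂)
inductive NStepSub : Bool → NSub → NSub → Prop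
  | ass {β : Bool} {u v w : NSub} : NStepSub β (.comp u (.comp v w)) (.comp (.comp u v) w)
  | idR {β : Bool} {u : NSub} : NStepSub β (.comp u .id) u
  | idShift {β : Bool} : NStepSub β (.comp .id .pi) .pi
  | consShift {β : Bool} {u : NSub} {V : NTm} : NStepSub β (.comp (.cons u V) .pi) u
  | map {β : Bool} {u v : NSub} {V : NTm} :
      NStepSub β (.comp u (.cons v V)) (.cons (.comp u v) (.clos u V))
  | consL {β : Bool} {u₁ u₂ : NSub} {V : NTm} :
      NStepSub β u₁ u₂ → NStepSub β (.cons u₁ V) (.cons u₂ V)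
  | consR {β : Bool} {u : NSub} {V₁ V₂ : NTm} :
      NStepTm β V₁ V₂ → NStepSub β (.cons u V₁) (.cons u V₂)
  | compL {β : Bool} {u₁ u₂ v : NSub} :
      NStepSub β u₁ u₂ → NStepSub β (.comp u₁ v) (.comp u₂ v)
  | compR {β : Bool} {u v₁ v₂ : NSub} :
      NStepSub β v₁ v₂ → NStepSub β (.comp u v₁) (.comp u v₂)
end

/- The correspondence `(Γ ⊢ M) ⟹ U` resp. `(Γ ⊢ s ▷ Δ) ⟹ u` between judgements and
name-free terms/substitutions (Definition 7.6 of the paper). -/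
mutual
inductive TrTm : List ℕ → Tm → NTm → Prop
  | var (Γ : List ℕ) (a : ℕ) : TrTm (a :: Γ) (.var a) (dbr 0)
  | weak {Γ : List ℕ} {a : ℕ} {n : ℕ} (b : ℕ) : a ≠ b →
      TrTm Γ (.var a) (dbr n) → TrTm (b :: Γ) (.var a) (dbr (n + 1))
  | app {Γ M N U V} : TrTm Γ M U → TrTm Γ N V → TrTm Γ (.app M N) (.app U V)
  | lam {Γ a M U} : TrTm (a :: Γ) M U → TrTm Γ (.lam a M) (.lam U)
  | clos {Γ s Δ M u U} : TrSub Γ s Δ u → TrTm Δ M U → TrTm Γ (.clos s M) (.clos u U)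
inductive TrSub : List ℕ → Subst → List ℕ → NSub → Prop
  | id (Γ) : TrSub Γ .id Γ .id
  | pi (Γ a) : TrSub (a :: Γ) (.pi a) Γ .pi
  | cons {Γ s Δ N u V} (a) : TrSub Γ s Δ u → TrTm Γ N V →
      TrSub Γ (.cons s N a) (a :: Δ) (.cons u V)
  | comp {Γ s Δ q Θ u v} : TrSub Γ s Δ u → TrSub Δ q Θ v →
      TrSub Γ (.comp s q) Θ (.comp u v)
end

/-- Left-nested compositions `(…((π_{a₁}∘π_{a₂})∘…)∘π_{a_n}` with `n ≥ 1`. -/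
inductive IsPiComp : Subst → Prop
  | single (a : ℕ) : IsPiComp (.pi a)
  | comp {s : Subst} (a : ℕ) : IsPiComp s → IsPiComp (.comp s (.pi a))

/-- Substitutions of the form `⟨r, N₁\b₁, …, N_k\b_k⟩` with `k ≥ 1`, where `r` is `id`
or a left-nested composition of `π`'s. -/
inductive IsConsChain : Subst → Prop
  | base {s : Subst} {N : Tm} {b : ℕ} : (s = Subst.id ∨ IsPiComp s) →
      IsConsChain (.cons s N b)
  | cons {s : Subst} {N : Tm} {b : ℕ} : IsConsChain s → IsConsChain (.cons s N b)

/-- The four shapes (i)–(iv) of σπα-normal substitutions. -/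
def NFShape (s : Subst) : Prop := s = Subst.id ∨ IsPiComp s ∨ IsConsChain s

/-- A term is pure iff it contains no subterm of the shape `s∘N`. -/
def PureTm : Tm → Prop
  | .var _ => True
  | .app M N => PureTm M ∧ PureTm N
  | .lam _ M => PureTm M
  | .clos _ _ => False

/-- `PiChainEnd s b`: `s` is a left-nested composition of `π`'s whose rightmost factor
is `π_b`, i.e. `s = ((…(π_{a₁}∘…)∘π_{a_m})∘π_b` with `m ≥ 0`. -/
inductive PiChainEnd : Subst → ℕ → Prop
  | single (b : ℕ) : PiChainEnd (.pi b) b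
  | comp {s : Subst} (b : ℕ) : IsPiComp s → PiChainEnd (.comp s (.pi b)) b

/-- Terms constructed from variables and blocks `((…((π_{a₁}∘π_{a₂})∘…)∘π_b)∘b`
(with `m ≥ 0` factors before `π_b`) using application and abstraction only. -/
inductive FromBlocks : Tm → Prop
  | var (a : ℕ) : FromBlocks (.var a)
  | block {s : Subst} {b : ℕ} : PiChainEnd s b → FromBlocks (.clos s (.var b))
  | app {M N : Tm} : FromBlocks M → FromBlocks N → FromBlocks (.app M N)
  | lam {M : Tm} (a : ℕ) : FromBlocks M → FromBlocks (.lam a M)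

/- The compatible closure of the single rule α₁ on terms and substitutions. -/
mutual
inductive A1Tm : Tm → Tm → Prop
  | alpha1 {a b : ℕ} {M : Tm} :
      (∃ i, a ∈ FV (.lam a M) i) → (∀ i, b ∉ FV (.lam a M) i) →
      A1Tm (.lam a M) (.lam b (.clos (.cons (.pi b) (.var b) a) M))
  | lamCong {a : ℕ} {M₁ M₂ : Tm} : A1Tm M₁ M₂ → A1Tm (.lam a M₁) (.lam a M₂)
  | appL {M₁ M₂ N : Tm} : A1Tm M₁ M₂ → A1Tm (.app M₁ N) (.app M₂ N)
  | appR {M N₁ N₂ : Tm} : A1Tm N₁ N₂ → A1Tm (.app M N₁) (.app M N₂)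
  | closL {s₁ s₂ : Subst} {M : Tm} : A1Sub s₁ s₂ → A1Tm (.clos s₁ M) (.clos s₂ M)
  | closR {s : Subst} {M₁ M₂ : Tm} : A1Tm M₁ M₂ → A1Tm (.clos s M₁) (.clos s M₂)
inductive A1Sub : Subst → Subst → Prop
  | consL {s₁ s₂ : Subst} {N : Tm} {a : ℕ} : A1Sub s₁ s₂ → A1Sub (.cons s₁ N a) (.cons s₂ N a)
  | consR {s : Subst} {N₁ N₂ : Tm} {a : ℕ} : A1Tm N₁ N₂ → A1Sub (.cons s N₁ a) (.cons s N₂ a)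
  | compL {s₁ s₂ q : Subst} : A1Sub s₁ s₂ → A1Sub (.comp s₁ q) (.comp s₂ q)
  | compR {s q₁ q₂ : Subst} : A1Sub q₁ q₂ → A1Sub (.comp s q₁) (.comp s q₂)
end


theorem Olam_bdd (a B : ℕ) (A : ℕ → Finset ℕ) (h : ∀ i, ∀ c ∈ A i, c ≤ B) :
    ∀ i, ∀ c ∈ Olam a A i, c ≤ B := by
  intro i c hc
  cases i with
  | zero =>
    simp only [Olam, Finset.mem_union, Finset.mem_erase] at hc
    rcases hc with hc | hc
    · exact h _ _ hc.2
    · exact h _ _ hc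
  | succ n => exact h _ _ hc

mutual
theorem FV_bdd : (M : Tm) → ∃ B, ∀ i, ∀ c ∈ FV M i, c ≤ B
  | .var a => ⟨a, by
      intro i c hc
      simp only [FV] at hc
      split at hc <;> simp_all⟩
  | .app M N => by
      obtain ⟨B, hB⟩ := FV_bdd M
      obtain ⟨C, hC⟩ := FV_bdd N
      refine ⟨max B C, fun i c hc => ?_⟩
      simp only [FV, Finset.mem_union] at hc
      rcases hc with hc | hc
      · exact le_max_of_le_left (hB _ _ hc)
      · exact le_max_of_le_right (hC _ _ hc)
  | .lam a M => by
      obtain ⟨B, hB⟩ := FV_bdd M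
      refine ⟨B, ?_⟩
      simp only [FV]
      exact Olam_bdd a B _ hB
  | .clos s M => by
      obtain ⟨B, hB⟩ := FV_bdd M
      simp only [FV]
      exact Osub_bdd s _ ⟨B, hB⟩
theorem Osub_bdd : (s : Subst) → (A : ℕ → Finset ℕ) → (∃ B, ∀ i, ∀ c ∈ A i, c ≤ B) →
    ∃ B, ∀ i, ∀ c ∈ Osub s A i, c ≤ B
  | .id, A, h => by simpa only [Osub] using h
  | .pi _, A, h => by
      obtain ⟨B, hB⟩ := h
      refine ⟨B, fun i c hc => ?_⟩
      simp only [Osub] at hc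
      cases i with
      | zero => simp [Opi] at hc
      | succ n => exact hB _ _ hc
  | .cons s N a, A, h => by
      obtain ⟨B, hB⟩ := h
      obtain ⟨C, hC⟩ := Osub_bdd s (Olam a A) ⟨B, Olam_bdd a B A hB⟩
      obtain ⟨D, hD⟩ := FV_bdd N
      refine ⟨max C D, fun i c hc => ?_⟩
      simp only [Osub, Finset.mem_union] at hc
      rcases hc with hc | hc
      · exact le_max_of_le_left (hC _ _ hc)
      · exact le_max_of_le_right (hD _ _ hc)
  | .comp s q, A, h => by
      simp only [Osub]
      exact Osub_bdd s _ (Osub_bdd q A h)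
end

theorem FV_fresh (M : Tm) : ∃ b, ∀ i, b ∉ FV M i := by
  obtain ⟨B, hB⟩ := FV_bdd M
  exact ⟨B + 1, fun i hi => by have := hB _ _ hi; omega⟩

def Clash (Γ : List ℕ) (M : Tm) : Prop :=
  ∃ (Δ : List ℕ) (a : ℕ) (Γ' : List ℕ), Γ = Δ ++ a :: Γ' ∧ a ∈ FV M (Δ.length + 1)

theorem comp_pi_shape : (s : Subst) → (Γ Δ : List ℕ) → (b : ℕ) → WfSub Γ s (b :: Δ) →
    (∀ q, ¬ StepSub false (.comp s (.pi b)) q) →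
    ∃ Δ' : List ℕ, Γ = Δ' ++ b :: Δ ∧ ∀ A i, Osub s A (Δ'.length + i) = A i
  | .id, Γ, Δ, b, _, hn => (hn _ .idShift).elim
  | .pi a, Γ, Δ, b, h, hn => by
      cases h
      refine ⟨[a], rfl, fun A i => ?_⟩
      rw [show ([a] : List ℕ).length + i = i + 1 by simp [Nat.add_comm]]
      simp only [Osub, Opi]
  | .cons s N a, Γ, Δ, b, h, hn => by
      cases h
      exact (hn _ .consShift).elim
  | .comp s .id, Γ, Δ, b, h, hn => (hn _ (.compL .idR)).elim
  | .comp s (.cons _ _ _), Γ, Δ, b, h, hn => (hn _ (.compL .map)).elim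
  | .comp s (.comp _ _), Γ, Δ, b, h, hn => (hn _ (.compL .ass)).elim
  | .comp s (.pi c), Γ, Δ, b, h, hn => by
      cases h with
      | comp h1 h2 =>
        cases h2
        obtain ⟨Δ', hΓ, hA⟩ := comp_pi_shape s Γ (b :: Δ) c h1
          (fun q hq => hn _ (.compL hq))
        refine ⟨Δ' ++ [c], by simp [hΓ], fun A i => ?_⟩
        rw [show (Δ' ++ [c]).length + i = Δ'.length + (i + 1) by simp; omega]
        simp only [Osub, hA, Opi]

theorem pure_or_clash : (M : Tm) → (Γ : List ℕ) → WfTm Γ M →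
    (∀ N, ¬ StepTm false M N) → PureTm M ∨ Clash Γ M
  | .var a, Γ, _, _ => Or.inl (by simp only [PureTm])
  | .app M N, Γ, h, hn => by
      cases h with
      | app h1 h2 =>
        rcases pure_or_clash M Γ h1 (fun q hq => hn _ (.appL hq)) with p | ⟨Δ, a, Γ', e, m⟩
        · rcases pure_or_clash N Γ h2 (fun q hq => hn _ (.appR hq)) with p' | ⟨Δ, a, Γ', e, m⟩
          · exact Or.inl (by simp only [PureTm]; exact ⟨p, p'⟩)
          · exact Or.inr ⟨Δ, a, Γ', e, by simp only [FV, Finset.mem_union]; exact Or.inr m⟩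
        · exact Or.inr ⟨Δ, a, Γ', e, by simp only [FV, Finset.mem_union]; exact Or.inl m⟩
  | .lam a M, Γ, h, hn => by
      cases h with
      | lam h1 =>
        rcases pure_or_clash M _ h1 (fun q hq => hn _ (.lamCong hq)) with p | ⟨Δ, b, Γ', e, m⟩
        · exact Or.inl (by simp only [PureTm]; exact p)
        · cases Δ with
          | nil =>
            simp only [List.nil_append, List.cons.injEq] at e
            obtain ⟨rfl, rfl⟩ := e
            obtain ⟨c, hc⟩ := FV_fresh (.lam a M)
            refine (hn _ (.alpha1 ⟨0, ?_⟩ hc)).elim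
            simp only [FV, Olam, Finset.mem_union]
            exact Or.inr m
          | cons d Δ =>
            simp only [List.cons_append, List.cons.injEq] at e
            obtain ⟨rfl, rfl⟩ := e
            refine Or.inr ⟨Δ, b, Γ', rfl, ?_⟩
            simp only [FV, Olam]
            exact m
  | .clos s (.lam _ _), Γ, h, hn => (hn _ .abs).elim
  | .clos s (.app _ _), Γ, h, hn => (hn _ .app).elim
  | .clos s (.clos _ _), Γ, h, hn => (hn _ .clos).elim
  | .clos .id (.var b), Γ, h, hn => (hn _ .idVar).elim
  | .clos (.cons s N a) (.var b), Γ, h, hn => by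
      by_cases e : a = b
      · subst e; exact (hn _ .consVar).elim
      · exact (hn _ (.new e)).elim
  | .clos (.pi a) (.var b), Γ, h, hn => by
      by_cases e : a = b
      · subst e
        cases h with
        | clos h1 h2 =>
          cases h1
          exact Or.inr ⟨[], a, _, rfl, by simp [FV, Osub, Opi]⟩
      · exact (hn _ (.pi1 e)).elim
  | .clos (.comp s .id) (.var b), Γ, h, hn => (hn _ (.closL .idR)).elim
  | .clos (.comp s (.cons _ _ _)) (.var b), Γ, h, hn => (hn _ (.closL .map)).elim
  | .clos (.comp s (.comp _ _)) (.var b), Γ, h, hn => (hn _ (.closL .ass)).elim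
  | .clos (.comp s (.pi a)) (.var b), Γ, h, hn => by
      by_cases e : a = b
      · subst e
        cases h with
        | clos h1 h2 =>
          cases h1 with
          | comp h3 h4 =>
            cases h4
            obtain ⟨Δ', hΓ, hA⟩ := comp_pi_shape s _ _ a h3 (fun q hq => hn _ (.closL hq))
            refine Or.inr ⟨Δ', a, _, hΓ, ?_⟩
            simp [FV, Osub, hA, Opi]
      · exact (hn _ (.pi2 e)).elim

theorem mem_lamCtx (a : ℕ) : (Δ : List ℕ) → (M : Tm) → a ∈ FV M (Δ.length + 1) →
    a ∈ FV (lamCtx (Δ ++ [a]) M) 0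
  | [], M, h => by
      simp only [List.nil_append, lamCtx, FV, Olam, Finset.mem_union]
      exact Or.inr h
  | d :: Δ, M, h => by
      simp only [List.cons_append, lamCtx]
      apply mem_lamCtx a Δ
      simp only [FV, Olam]
      exact h

/-- a derivable judgement that is a σπα-normal form (w.r.t. `⇝`,
including α₂) has a pure term. -/
theorem normal_form_pure {Γ : List ℕ} {M : Tm}
    (h : WfTm Γ M) (hnf : ∀ p : List ℕ × Tm, ¬ StepJ false (Γ, M) p) : PureTm M := by
  rcases pure_or_clash M Γ h (fun N hN => hnf _ (.step hN)) with p | ⟨Δ, a, Γ', rfl, m⟩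
  · exact p
  · obtain ⟨c, hc⟩ := FV_fresh (lamCtx (Δ ++ [a]) M)
    exact (hnf _ (.alpha2 ⟨0, mem_lamCtx a Δ M m⟩ hc)).elim
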